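/- For all f, g ∈ L¹(ℝ³), ∫_{ℝ³} (1/p⁰)Q(f,g)(p̄) dp̄ = 0; that is, the gain and loss terms have equal integrals: ∫_{ℝ³} (1/p⁰)Q⁺(f,g)(p̄) dp̄ = ∫_{ℝ³} (1/p⁰)Q⁻(f,g)(p̄) dp̄. -/

import Mathlib

/-!
For a fixed direction `ω`, the collision map `(p̄, q̄) ↦ (p̄′, q̄′)` is an involution that preserves
the measure `dp̄ dq̄ / (p⁰ q⁰)` (`coll_invariant`). Hence `T (ω, p̄, q̄) = (ω, p̄′, q̄′)` preserves
`dω dp̄ dq̄ / (p⁰ q⁰)`, and composing the integrand `f(p̄) g(q̄) S₀(p̄, q̄, p̄′, q̄′)` of the loss term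
with `T` gives, by the symmetry of `S₀`, the integrand of the gain term. The loss integrand is
integrable because `S₀` is bounded and `p⁰, q⁰ ≥ 1`, so Fubini (`fubini_coll`) concludes.

The invariance is proved without computing a Jacobian in six variables. In a metric-orthonormal
frame whose first vector is `ω̂`, a momentum has a longitudinal component `m sinh θ` and a
transverse component `y`, where `m = √(1 + |y|²)` and `θ` is the rapidity. Then `p⁰ = m cosh θ`, so
`dp̄ / p⁰` is a multiple of `dθ dy` (`massMeas_eq`). The collision fixes the transverse components
and reflects both rapidities about the rapidity of the total momentum: it sends `(a, b)` to
`(b + ℓ(a - b), a + ℓ(a - b))` with an explicit odd function `ℓ` depending on the two transverse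
masses (`coll_frame_rapid`). Oddness of `ℓ` gives the involution property, and such a map is a
composition of shears, so it preserves Lebesgue measure (`measurePreserving_rapColl`).
-/

open MeasureTheory Real

noncomputable section

/-- Momentum space `ℝ³`. -/
abbrev E3 : Type := EuclideanSpace ℝ (Fin 3)

/-- The scalar product associated with the Bianchi type I metric coefficients `α = a(t)`,
`β = b(t)`: `p̄·q̄ = α²p¹q¹ + β²(p²q² + p³q³)`. -/
def mdot (α β : ℝ) (p q : E3) : ℝ :=
  α ^ 2 * p 0 * q 0 + β ^ 2 * (p 1 * q 1 + p 2 * q 2)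

/-- `p⁰ = √(1 + |p̄|²)` where `|p̄|² = p̄·p̄`. -/
def pZ (α β : ℝ) (p : E3) : ℝ := Real.sqrt (1 + mdot α β p p)

/-- `ω` normalized to unit length for the metric norm. -/
def omHat (α β : ℝ) (ω : E3) : E3 := (Real.sqrt (mdot α β ω ω))⁻¹ • ω

/-- The total energy `e = p⁰ + q⁰`. -/
def collE (α β : ℝ) (p q : E3) : ℝ := pZ α β p + pZ α β q

/-- The function `C(p̄, q̄, ω)` of Glassey's representation of post-collisional momenta. -/
def collC (α β : ℝ) (p q ω : E3) : ℝ :=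
  2 * pZ α β p * pZ α β q * collE α β p q *
      mdot α β (omHat α β ω) ((pZ α β q)⁻¹ • q - (pZ α β p)⁻¹ • p) /
    (collE α β p q ^ 2 - mdot α β (omHat α β ω) (p + q) ^ 2)

/-- The post-collisional momentum `p̄′ = p̄ + C(p̄,q̄,ω)ω̂`. -/
def pPr (α β : ℝ) (p q ω : E3) : E3 := p + collC α β p q ω • omHat α β ω

/-- The post-collisional momentum `q̄′ = q̄ − C(p̄,q̄,ω)ω̂`. -/
def qPr (α β : ℝ) (p q ω : E3) : E3 := q - collC α β p q ω • omHat α β ω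

/-- The surface measure on the unit sphere `S² ⊂ ℝ³`. -/
def sphMeas : Measure (Metric.sphere (0 : E3) 1) := (volume : Measure E3).toSphere

/-- The gain term `Q⁺(f,g)`. -/
def Qplus (α β : ℝ) (S₀ : E3 → E3 → E3 → E3 → ℝ) (f g : E3 → ℝ) (p : E3) : ℝ :=
  α * β ^ 2 *
    ∫ q : E3, (pZ α β q)⁻¹ *
      ∫ ω : Metric.sphere (0 : E3) 1,
        f (pPr α β p q ω) * g (qPr α β p q ω) *
          S₀ p q (pPr α β p q ω) (qPr α β p q ω) ∂sphMeas

/-- The loss term `Q⁻(f,g)`. -/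
def Qminus (α β : ℝ) (S₀ : E3 → E3 → E3 → E3 → ℝ) (f g : E3 → ℝ) (p : E3) : ℝ :=
  α * β ^ 2 *
    ∫ q : E3, (pZ α β q)⁻¹ *
      ∫ ω : Metric.sphere (0 : E3) 1,
        f p * g q * S₀ p q (pPr α β p q ω) (qPr α β p q ω) ∂sphMeas

/-- The collision operator `Q = Q⁺ − Q⁻`. -/
def Qcoll (α β : ℝ) (S₀ : E3 → E3 → E3 → E3 → ℝ) (f g : E3 → ℝ) (p : E3) : ℝ :=
  Qplus α β S₀ f g p - Qminus α β S₀ f g p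

/-- The space `L¹(ℝ³)`. -/
abbrev L1 : Type := Lp ℝ 1 (volume : Measure E3)

/-- Membership in `X_r = {f ∈ L¹(ℝ³) : f ≥ 0 a.e., ‖f‖ ≤ r}`. -/
def memX (r : ℝ) (f : L1) : Prop := (0 ≤ᵐ[volume] ⇑f) ∧ ‖f‖ ≤ r

end

/-! ### The metric scalar product and an adapted frame -/

section Frame

variable {α β : ℝ}

lemma mdot_add_left (p q r : E3) : mdot α β (p + q) r = mdot α β p r + mdot α β q r := by
  simp only [mdot, PiLp.add_apply]; ring

lemma mdot_smul_left (c : ℝ) (p r : E3) : mdot α β (c • p) r = c * mdot α β p r := by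
  simp only [mdot, PiLp.smul_apply, smul_eq_mul]; ring

lemma mdot_add_right (p q r : E3) : mdot α β r (p + q) = mdot α β r p + mdot α β r q := by
  simp only [mdot, PiLp.add_apply]; ring

lemma mdot_sub_right (p q r : E3) : mdot α β r (p - q) = mdot α β r p - mdot α β r q := by
  simp only [mdot, PiLp.sub_apply]; ring

lemma mdot_smul_right (c : ℝ) (p r : E3) : mdot α β r (c • p) = c * mdot α β r p := by
  simp only [mdot, PiLp.smul_apply, smul_eq_mul]; ring

lemma mdot_self_nonneg (p : E3) : 0 ≤ mdot α β p p := by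
  have : mdot α β p p = (α * p 0) ^ 2 + ((β * p 1) ^ 2 + (β * p 2) ^ 2) := by
    simp only [mdot]; ring
  rw [this]; positivity

lemma mdot_self_pos (hα : 0 < α) (hβ : 0 < β) {p : E3} (hp : p ≠ 0) : 0 < mdot α β p p := by
  refine lt_of_le_of_ne (mdot_self_nonneg p) fun h => hp ?_
  have h' : (α * p 0) ^ 2 + ((β * p 1) ^ 2 + (β * p 2) ^ 2) = 0 := by
    rw [h]; simp only [mdot]; ring
  have h0 : α * p 0 = 0 := by
    nlinarith [sq_nonneg (α * p 0), sq_nonneg (β * p 1), sq_nonneg (β * p 2)]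
  have h1 : β * p 1 = 0 := by
    nlinarith [sq_nonneg (α * p 0), sq_nonneg (β * p 1), sq_nonneg (β * p 2)]
  have h2 : β * p 2 = 0 := by
    nlinarith [sq_nonneg (α * p 0), sq_nonneg (β * p 1), sq_nonneg (β * p 2)]
  ext i
  fin_cases i
  · simpa [hα.ne'] using h0
  · simpa [hβ.ne'] using h1
  · simpa [hβ.ne'] using h2

lemma mdot_omHat_self (hα : 0 < α) (hβ : 0 < β) {ω : E3} (hω : ω ≠ 0) :
    mdot α β (omHat α β ω) (omHat α β ω) = 1 := by
  have h := mdot_self_pos hα hβ hω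
  have hs := Real.sq_sqrt h.le
  have hne : √(mdot α β ω ω) ≠ 0 := (Real.sqrt_pos.2 h).ne'
  rw [omHat, mdot_smul_left, mdot_smul_right]
  field_simp
  exact hs.symm

lemma pZ_pos (p : E3) : 0 < pZ α β p :=
  Real.sqrt_pos.2 (by linarith [mdot_self_nonneg (α := α) (β := β) p])

lemma one_le_pZ (p : E3) : 1 ≤ pZ α β p :=
  Real.one_le_sqrt.2 (by linarith [mdot_self_nonneg (α := α) (β := β) p])

/-- Every metric unit vector `w` is the first vector of a metric-orthonormal frame; `A` is the
linear isomorphism sending coordinates in such a frame to momenta. -/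
lemma exists_frame (hα : 0 < α) (hβ : 0 < β) (w : E3) (hw : mdot α β w w = 1) :
    ∃ A : (ℝ × ℝ × ℝ) ≃L[ℝ] E3,
      (∀ x y, mdot α β (A x) (A y) = x.1 * y.1 + (x.2.1 * y.2.1 + x.2.2 * y.2.2)) ∧
      ∀ t x, A x + t • w = A (x.1 + t, x.2) := by
  -- `Dw` is the image of `w` under the isometry `diag(α, β, β)` onto Euclidean space.
  let Dw : E3 := !₂[α * w 0, β * w 1, β * w 2]
  have hDw : ‖Dw‖ = 1 := by
    rw [EuclideanSpace.norm_eq, Real.sqrt_eq_one]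
    simp only [Fin.sum_univ_three, Real.norm_eq_abs, sq_abs]
    rw [← hw]; simp [Dw, mdot]; ring
  have hv : Orthonormal ℝ (({0} : Set (Fin 3)).domRestrict fun _ => Dw) := by
    refine ⟨fun _ => hDw, fun i j hij => ?_⟩
    exact absurd (Subsingleton.elim i j) hij
  obtain ⟨b, hb⟩ := hv.exists_orthonormalBasis_extension_of_card_eq (by simp)
  have hb0 : b 0 = Dw := hb 0 rfl
  let c : Fin 3 → E3 := fun i => !₂[b i 0 / α, b i 1 / β, b i 2 / β]
  have hc : ∀ i j, mdot α β (c i) (c j) = if i = j then 1 else 0 := by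
    intro i j
    rw [← b.inner_eq_ite i j]
    simp [c, mdot, PiLp.inner_apply, Fin.sum_univ_three]
    field_simp
    ring
  have hcw : c 0 = w := by
    ext i
    fin_cases i <;> simp [c, hb0, Dw, hα.ne', hβ.ne']
  let L : (ℝ × ℝ × ℝ) →ₗ[ℝ] E3 :=
    { toFun := fun x => x.1 • c 0 + x.2.1 • c 1 + x.2.2 • c 2
      map_add' := by intro x y; simp only [Prod.fst_add, Prod.snd_add]; module
      map_smul' := by
        intro r x
        simp only [Prod.smul_fst, Prod.smul_snd, smul_eq_mul, RingHom.id_apply]; module }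
  have hL : ∀ x, L x = x.1 • c 0 + x.2.1 • c 1 + x.2.2 • c 2 := fun _ => rfl
  have hLdot : ∀ x y, mdot α β (L x) (L y) =
      x.1 * y.1 + (x.2.1 * y.2.1 + x.2.2 * y.2.2) := by
    intro x y
    simp only [hL, mdot_add_left, mdot_add_right, mdot_smul_left, mdot_smul_right, hc]
    simp
    ring
  have hinj : Function.Injective L := by
    rw [injective_iff_map_eq_zero]
    intro x hx
    have h := hLdot x x
    rw [hx] at h
    have h0 : x.1 * x.1 + (x.2.1 * x.2.1 + x.2.2 * x.2.2) = 0 := by rw [← h]; simp [mdot]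
    have h1 : x.1 = 0 := by nlinarith [sq_nonneg x.1, sq_nonneg x.2.1, sq_nonneg x.2.2]
    have h2 : x.2.1 = 0 := by nlinarith [sq_nonneg x.1, sq_nonneg x.2.1, sq_nonneg x.2.2]
    have h3 : x.2.2 = 0 := by nlinarith [sq_nonneg x.1, sq_nonneg x.2.1, sq_nonneg x.2.2]
    exact Prod.ext h1 (Prod.ext h2 h3)
  let A := (L.linearEquivOfInjective hinj (by simp)).toContinuousLinearEquiv
  have hA : ∀ x, A x = L x := fun _ => rfl
  refine ⟨A, fun x y => by rw [hA, hA, hLdot], fun t x => ?_⟩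
  rw [hA, hA, hL, hL, ← hcw]
  module

end Frame

/-! ### Rapidity coordinates -/

/-- The transverse mass `√(1 + |y|²)` of a particle with momentum `y` orthogonal to the
collision direction. -/
noncomputable def tmass (y : ℝ × ℝ) : ℝ := √(1 + (y.1 ^ 2 + y.2 ^ 2))

lemma tmass_pos (y : ℝ × ℝ) : 0 < tmass y := Real.sqrt_pos.2 (by positivity)

lemma tmass_sq (y : ℝ × ℝ) : tmass y ^ 2 = 1 + (y.1 ^ 2 + y.2 ^ 2) :=
  Real.sq_sqrt (by positivity)

@[fun_prop]
lemma measurable_tmass : Measurable tmass := by unfold tmass; fun_prop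

/-- The point with longitudinal rapidity `x.1` and transverse momentum `x.2`, in frame
coordinates. -/
noncomputable def rapid (x : ℝ × ℝ × ℝ) : ℝ × ℝ × ℝ := (tmass x.2 * sinh x.1, x.2)

@[fun_prop]
lemma measurable_rapid : Measurable rapid := by
  unfold rapid
  have := Real.measurable_sinh
  fun_prop

lemma rapid_surjective : Function.Surjective rapid := by
  rintro ⟨t, y⟩
  refine ⟨(arsinh (t / tmass y), y), ?_⟩
  have := (tmass_pos y).ne'
  simp only [rapid, Real.sinh_arsinh]
  rw [mul_div_cancel₀ _ this]

/-- The invariant measure `dp̄ / p⁰` on momentum space. -/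
noncomputable def massMeas (α β : ℝ) : Measure E3 :=
  volume.withDensity fun p => (((pZ α β p)⁻¹).toNNReal : ENNReal)

/-- The amount `2φ - a - b` that a collision adds to the exchanged rapidities, where `φ` is the
rapidity of the total momentum; it depends only on the relative rapidity `η = a - b` and the
transverse momenta. -/
noncomputable def rapShift (η : ℝ) (y z : ℝ × ℝ) : ℝ :=
  log ((tmass y * exp η + tmass z) / (tmass y + tmass z * exp η))

lemma rapShift_neg (η : ℝ) (y z : ℝ × ℝ) : rapShift (-η) y z = -rapShift η y z := by
  have h1 := tmass_pos y
  have h2 := tmass_pos z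
  have h3 := exp_pos η
  rw [rapShift, rapShift, ← log_inv, inv_div, exp_neg]
  congr 1
  field_simp

/-- The collision in rapidity coordinates. In one longitudinal dimension, the total momentum has
some rapidity `φ`, and the rapidities `a`, `b` of the particles become `2φ - a`, `2φ - b`. -/
noncomputable def rapColl (x : (ℝ × ℝ × ℝ) × (ℝ × ℝ × ℝ)) : (ℝ × ℝ × ℝ) × (ℝ × ℝ × ℝ) :=
  ((x.2.1 + rapShift (x.1.1 - x.2.1) x.1.2 x.2.2, x.1.2),
   (x.1.1 + rapShift (x.1.1 - x.2.1) x.1.2 x.2.2, x.2.2))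

lemma rapColl_rapColl (x) : rapColl (rapColl x) = x := by
  obtain ⟨⟨a, y⟩, b, z⟩ := x
  have h : (b + rapShift (a - b) y z) - (a + rapShift (a - b) y z) = -(a - b) := by ring
  simp only [rapColl, h, rapShift_neg]
  simp

section Coordinates

variable {α β : ℝ}

/-- The hyperbolic identity behind the collision formula: `(m sinh a, m cosh a)` and
`(n sinh b, n cosh b)` are the two momenta, and the fraction is Glassey's `C(p̄, q̄, ω)`. -/
lemma rapidity_identity {m n : ℝ} (hm : 0 < m) (hn : 0 < n) (a b : ℝ) :
    m * sinh a + 2 * (m * cosh a + n * cosh b) *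
        (m * cosh a * (n * sinh b) - n * cosh b * (m * sinh a)) /
        ((m * cosh a + n * cosh b) ^ 2 - (m * sinh a + n * sinh b) ^ 2) =
      m * sinh (b + log ((m * exp (a - b) + n) / (m + n * exp (a - b)))) ∧
    n * sinh b - 2 * (m * cosh a + n * cosh b) *
        (m * cosh a * (n * sinh b) - n * cosh b * (m * sinh a)) /
        ((m * cosh a + n * cosh b) ^ 2 - (m * sinh a + n * sinh b) ^ 2) =
      n * sinh (a + log ((m * exp (a - b) + n) / (m + n * exp (a - b)))) := by
  have hX := exp_pos a
  have hY := exp_pos b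
  have hQ : 0 < (m * exp (a - b) + n) / (m + n * exp (a - b)) := by positivity
  rw [sinh_eq (b + _), sinh_eq (a + _), neg_add, neg_add, exp_add, exp_add, exp_add, exp_add,
    exp_neg (log _), exp_log hQ]
  simp only [cosh_eq, sinh_eq, exp_neg, exp_sub]
  generalize exp a = X at *
  generalize exp b = Y at *
  have hden : (m * ((X + X⁻¹) / 2) + n * ((Y + Y⁻¹) / 2)) ^ 2
      - (m * ((X - X⁻¹) / 2) + n * ((Y - Y⁻¹) / 2)) ^ 2
      = (m * X + n * Y) * (m * Y + n * X) / (X * Y) := by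
    field_simp
    ring
  rw [hden]
  have h1 : m * X + n * Y ≠ 0 := by positivity
  have h2 : m * Y + n * X ≠ 0 := by positivity
  constructor
  · field_simp
    ring
  · field_simp
    ring

variable {A : (ℝ × ℝ × ℝ) ≃L[ℝ] E3}

lemma pZ_frame_rapid
    (hA : ∀ x y, mdot α β (A x) (A y) = x.1 * y.1 + (x.2.1 * y.2.1 + x.2.2 * y.2.2))
    (x : ℝ × ℝ × ℝ) : pZ α β (A (rapid x)) = tmass x.2 * cosh x.1 := by
  have h : 1 + mdot α β (A (rapid x)) (A (rapid x)) = (tmass x.2 * cosh x.1) ^ 2 := by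
    rw [hA, mul_pow, cosh_sq]
    simp only [rapid]
    linear_combination -tmass_sq x.2
  rw [pZ, h, Real.sqrt_sq]
  have := tmass_pos x.2
  have := cosh_pos x.1
  positivity

/-- In frame and rapidity coordinates the collision map is `rapColl`. -/
lemma coll_frame_rapid {ω : E3}
    (hA : ∀ x y, mdot α β (A x) (A y) = x.1 * y.1 + (x.2.1 * y.2.1 + x.2.2 * y.2.2))
    (hw : ∀ t x, A x + t • omHat α β ω = A (x.1 + t, x.2)) (x y : ℝ × ℝ × ℝ) :
    pPr α β (A (rapid x)) (A (rapid y)) ω = A (rapid (rapColl (x, y)).1) ∧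
    qPr α β (A (rapid x)) (A (rapid y)) ω = A (rapid (rapColl (x, y)).2) := by
  have hw0 : omHat α β ω = A (1, 0, 0) := by
    have := hw 1 0
    rw [map_zero, zero_add, one_smul] at this
    rw [this]
    simp; rfl
  have hdot : ∀ x, mdot α β (omHat α β ω) (A x) = x.1 := by
    intro x; rw [hw0, hA]; simp
  have hC : collC α β (A (rapid x)) (A (rapid y)) ω =
      2 * (tmass x.2 * cosh x.1 + tmass y.2 * cosh y.1) *
        (tmass x.2 * cosh x.1 * (tmass y.2 * sinh y.1)
          - tmass y.2 * cosh y.1 * (tmass x.2 * sinh x.1)) /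
        ((tmass x.2 * cosh x.1 + tmass y.2 * cosh y.1) ^ 2
          - (tmass x.2 * sinh x.1 + tmass y.2 * sinh y.1) ^ 2) := by
    have h1 := (tmass_pos x.2).ne'
    have h2 := (tmass_pos y.2).ne'
    have h3 := (cosh_pos x.1).ne'
    have h4 := (cosh_pos y.1).ne'
    rw [collC, collE, mdot_sub_right, mdot_smul_right, mdot_smul_right, mdot_add_right, hdot,
      hdot, pZ_frame_rapid hA, pZ_frame_rapid hA]
    simp only [rapid]
    congr 1
    field_simp
  obtain ⟨e1, e2⟩ := rapidity_identity (tmass_pos x.2) (tmass_pos y.2) x.1 y.1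
  constructor
  · rw [pPr, hw, hC]
    congr 1
    simp only [rapid, rapColl, rapShift]
    rw [e1]
  · rw [qPr, sub_eq_add_neg, ← neg_smul, hw, hC]
    congr 1
    simp only [rapid, rapColl, rapShift]
    rw [← sub_eq_add_neg, e2]

end Coordinates

/-! ### Invariance of the measure -/

lemma measurable_rapShift :
    Measurable fun x : ℝ × (ℝ × ℝ) × (ℝ × ℝ) => rapShift x.1 x.2.1 x.2.2 := by
  unfold rapShift; fun_prop

/-- Translations and reflections of the first coordinate by an amount depending on the second
preserve Lebesgue measure. -/
lemma measurePreserving_shear {Y : Type*} [MeasurableSpace Y] (ν : Measure Y) [SFinite ν]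
    {s : Y → ℝ} (hs : Measurable s) :
    MeasurePreserving (fun x : ℝ × Y => (s x.2 + x.1, x.2)) (volume.prod ν) (volume.prod ν) ∧
    MeasurePreserving (fun x : ℝ × Y => (s x.2 - x.1, x.2)) (volume.prod ν) (volume.prod ν) := by
  have h1 : MeasurePreserving (fun x : Y × ℝ => (x.1, s x.1 + x.2))
      (ν.prod volume) (ν.prod volume) :=
    (MeasurePreserving.id ν).skew_product (g := fun y a => s y + a)
      (by simp only [Function.uncurry_def]; fun_prop)
      (.of_forall fun y => map_add_left_eq_self volume (s y))
  have h2 : MeasurePreserving (fun x : Y × ℝ => (x.1, s x.1 - x.2))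
      (ν.prod volume) (ν.prod volume) :=
    (MeasurePreserving.id ν).skew_product (g := fun y a => s y - a)
      (by simp only [Function.uncurry_def]; fun_prop)
      (.of_forall fun y => (Measure.measurePreserving_sub_left volume (s y)).map_eq)
  have sw := Measure.measurePreserving_swap (μ := (volume : Measure ℝ)) (ν := ν)
  have sw' := Measure.measurePreserving_swap (μ := ν) (ν := (volume : Measure ℝ))
  exact ⟨sw'.comp (h1.comp sw), sw'.comp (h2.comp sw)⟩

/-- The collision in rapidity coordinates is a composition of three shears: pass to the relative
rapidity `η = a - b`, shift `b` by a function of `η`, and replace `η` by `b - η`. -/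
lemma measurePreserving_rapColl : MeasurePreserving rapColl
    ((volume : Measure (ℝ × ℝ × ℝ)).prod volume) ((volume : Measure (ℝ × ℝ × ℝ)).prod volume) := by
  have sw := Measure.measurePreserving_swap (μ := (volume : Measure (ℝ × ℝ × ℝ)))
    (ν := (volume : Measure (ℝ × ℝ × ℝ)))
  have S1 : MeasurePreserving
      (fun x : (ℝ × ℝ × ℝ) × (ℝ × ℝ × ℝ) => (x.1, ((-x.1.1 + x.2.1, x.2.2) : ℝ × ℝ × ℝ)))
      (volume.prod volume) (volume.prod volume) := by
    refine (MeasurePreserving.id volume).skew_product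
      (g := fun u v : ℝ × ℝ × ℝ => ((-u.1 + v.1, v.2) : ℝ × ℝ × ℝ))
      (by simp only [Function.uncurry_def]; fun_prop) (.of_forall fun u => ?_)
    exact (measurePreserving_shear (volume : Measure (ℝ × ℝ))
      (s := fun _ => -u.1) measurable_const).1.map_eq
  have S2 : MeasurePreserving
      (fun x : (ℝ × ℝ × ℝ) × (ℝ × ℝ × ℝ) =>
        (x.1, (((x.1.1 + rapShift x.1.1 x.1.2 x.2.2) + x.2.1, x.2.2) : ℝ × ℝ × ℝ)))
      (volume.prod volume) (volume.prod volume) := by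
    refine (MeasurePreserving.id volume).skew_product
      (g := fun u v : ℝ × ℝ × ℝ => (((u.1 + rapShift u.1 u.2 v.2) + v.1, v.2) : ℝ × ℝ × ℝ))
      ?_ (.of_forall fun u => ?_)
    · simp only [Function.uncurry_def]
      have : Measurable fun x : (ℝ × ℝ × ℝ) × (ℝ × ℝ × ℝ) => rapShift x.1.1 x.1.2 x.2.2 :=
        measurable_rapShift.comp (g := fun x : ℝ × (ℝ × ℝ) × (ℝ × ℝ) => rapShift x.1 x.2.1 x.2.2)
          (f := fun x : (ℝ × ℝ × ℝ) × (ℝ × ℝ × ℝ) => (x.1.1, x.1.2, x.2.2)) (by fun_prop)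
      fun_prop
    · have : Measurable fun z : ℝ × ℝ => rapShift u.1 u.2 z :=
        measurable_rapShift.comp (g := fun x : ℝ × (ℝ × ℝ) × (ℝ × ℝ) => rapShift x.1 x.2.1 x.2.2)
          (f := fun z : ℝ × ℝ => (u.1, u.2, z)) (by fun_prop)
      exact (measurePreserving_shear (volume : Measure (ℝ × ℝ))
        (s := fun z => u.1 + rapShift u.1 u.2 z) (by fun_prop)).1.map_eq
  have S3 : MeasurePreserving
      (fun x : (ℝ × ℝ × ℝ) × (ℝ × ℝ × ℝ) => (x.1, ((x.1.1 - x.2.1, x.2.2) : ℝ × ℝ × ℝ)))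
      (volume.prod volume) (volume.prod volume) := by
    refine (MeasurePreserving.id volume).skew_product
      (g := fun u v : ℝ × ℝ × ℝ => ((u.1 - v.1, v.2) : ℝ × ℝ × ℝ))
      (by simp only [Function.uncurry_def]; fun_prop) (.of_forall fun u => ?_)
    exact (measurePreserving_shear (volume : Measure (ℝ × ℝ))
      (s := fun _ => u.1) measurable_const).2.map_eq
  have h := sw.comp (S3.comp (sw.comp (S2.comp (sw.comp (S1.comp sw)))))
  convert! h using 1
  funext x
  obtain ⟨⟨a, y⟩, b, z⟩ := x
  have e : -b + a = a - b := by ring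
  simp only [rapColl, Function.comp, Prod.swap, e, Prod.mk.injEq, and_true]
  constructor <;> ring

section Invariance

variable {α β : ℝ}

lemma continuous_pZ : Continuous (pZ α β) := by
  unfold pZ mdot
  fun_prop

/-- The change of variables `t = m sinh θ`, for which `dt / √(m² + t²) = dθ`. -/
lemma lintegral_sinh {m : ℝ} (hm : 0 < m) (F : ℝ → ENNReal) :
    ∫⁻ t, F t = ∫⁻ θ, ENNReal.ofReal (m * cosh θ) * F (m * sinh θ) := by
  have hd : ∀ θ ∈ Set.univ, HasDerivWithinAt (fun θ => m * sinh θ) (m * cosh θ) Set.univ θ :=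
    fun θ _ => ((hasDerivAt_sinh θ).const_mul m).hasDerivWithinAt
  have hinj : Set.InjOn (fun θ => m * sinh θ) Set.univ :=
    fun a _ b _ h => sinh_injective (mul_left_cancel₀ hm.ne' h)
  have himg : (fun θ => m * sinh θ) '' Set.univ = Set.univ := by
    rw [Set.image_univ, Set.range_eq_univ]
    intro t
    refine ⟨arsinh (t / m), ?_⟩
    simp only [sinh_arsinh]
    field_simp
  have h := lintegral_image_eq_lintegral_abs_deriv_mul MeasurableSet.univ hd hinj F
  rw [himg] at h
  simp only [Measure.restrict_univ] at h
  rw [h]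
  congr 1
  funext θ
  rw [abs_of_pos (mul_pos hm (cosh_pos θ))]

/-- In frame and rapidity coordinates, `dp̄ / p⁰` is a multiple of Lebesgue measure. -/
lemma massMeas_eq {A : (ℝ × ℝ × ℝ) ≃L[ℝ] E3}
    (hA : ∀ x y, mdot α β (A x) (A y) = x.1 * y.1 + (x.2.1 * y.2.1 + x.2.2 * y.2.2)) :
    ∃ c : NNReal, massMeas α β =
      c • (volume : Measure (ℝ × ℝ × ℝ)).map (fun x => A (rapid x)) := by
  have hAm : Measurable A := A.continuous.measurable
  have hmm : Measurable fun x => A (rapid x) := hAm.comp measurable_rapid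
  have hHaar : ((volume : Measure (ℝ × ℝ × ℝ)).map A).IsAddHaarMeasure :=
    have h2 : (volume : Measure (ℝ × ℝ)).IsAddHaarMeasure :=
      inferInstanceAs ((volume : Measure ℝ).prod (volume : Measure ℝ)).IsAddHaarMeasure
    have h3 : (volume : Measure (ℝ × ℝ × ℝ)).IsAddHaarMeasure :=
      inferInstanceAs ((volume : Measure ℝ).prod (volume : Measure (ℝ × ℝ))).IsAddHaarMeasure
    A.isAddHaarMeasure_map _
  obtain ⟨c, hc⟩ : ∃ c : NNReal,
      (volume : Measure E3) = c • (volume : Measure (ℝ × ℝ × ℝ)).map A :=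
    ⟨_, Measure.isAddLeftInvariant_eq_smul volume ((volume : Measure (ℝ × ℝ × ℝ)).map A)⟩
  refine ⟨c, ?_⟩
  have hw : Measurable fun p : E3 => (((pZ α β p)⁻¹).toNNReal : ENNReal) := by
    have := (continuous_pZ (α := α) (β := β)).measurable
    fun_prop
  refine Measure.ext_of_lintegral _ fun F hF => ?_
  have hFm : Measurable fun x : ℝ × ℝ × ℝ =>
      (((pZ α β (A x))⁻¹).toNNReal : ENNReal) * F (A x) :=
    (hw.comp hAm).mul (hF.comp hAm)
  rw [massMeas, lintegral_withDensity_eq_lintegral_mul _ hw hF, lintegral_smul_measure,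
    lintegral_map hF hmm]
  conv_lhs => rw [hc]
  rw [lintegral_smul_measure, lintegral_map (hw.mul hF) hAm]
  congr 1
  simp only [Pi.mul_apply]
  rw [Measure.volume_eq_prod, lintegral_prod_symm' _ hFm,
    lintegral_prod_symm' (fun x => F (A (rapid x))) (hF.comp hmm)]
  congr 1
  funext y
  rw [lintegral_sinh (tmass_pos y)]
  congr 1
  funext θ
  have h := pZ_frame_rapid hA (θ, y)
  have hpos : 0 < tmass y * cosh θ := mul_pos (tmass_pos y) (cosh_pos θ)
  simp only [rapid] at h ⊢
  rw [h, ← mul_assoc]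
  change ENNReal.ofReal _ * ENNReal.ofReal _ * _ = _
  rw [← ENNReal.ofReal_mul hpos.le, mul_inv_cancel₀ hpos.ne']
  simp

instance : SFinite (massMeas α β) := by unfold massMeas; infer_instance

lemma measurable_coll :
    Measurable fun x : E3 × E3 × E3 => (pPr α β x.2.1 x.2.2 x.1, qPr α β x.2.1 x.2.2 x.1) := by
  have h := (continuous_pZ (α := α) (β := β)).measurable
  have hd : Measurable fun x : E3 × E3 => mdot α β x.1 x.2 := by
    unfold mdot
    exact Continuous.measurable (by fun_prop)
  have ho : Measurable (omHat α β) := by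
    have : Measurable fun x : E3 => mdot α β x x := hd.comp (measurable_id.prodMk measurable_id)
    unfold omHat
    fun_prop
  have hC : Measurable fun x : E3 × E3 × E3 => collC α β x.2.1 x.2.2 x.1 := by
    have h1 : Measurable fun x : E3 × E3 × E3 => mdot α β (omHat α β x.1) (x.2.1 + x.2.2) :=
      hd.comp (Measurable.prodMk (by fun_prop) (by fun_prop))
    have h2 : Measurable fun x : E3 × E3 × E3 => mdot α β (omHat α β x.1)
        ((pZ α β x.2.2)⁻¹ • x.2.2 - (pZ α β x.2.1)⁻¹ • x.2.1) :=
      hd.comp (Measurable.prodMk (by fun_prop) (by fun_prop))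
    unfold collC collE
    fun_prop
  unfold pPr qPr
  fun_prop

/-- For a fixed direction `ω`, the collision map `(p̄, q̄) ↦ (p̄′, q̄′)` is an involution and
preserves `dp̄ dq̄ / (p⁰ q⁰)`. -/
lemma coll_invariant (hα : 0 < α) (hβ : 0 < β) {ω : E3} (hω : ω ≠ 0) :
    (∀ p q, pPr α β (pPr α β p q ω) (qPr α β p q ω) ω = p ∧
      qPr α β (pPr α β p q ω) (qPr α β p q ω) ω = q) ∧
    ((massMeas α β).prod (massMeas α β)).map
        (fun x : E3 × E3 => (pPr α β x.1 x.2 ω, qPr α β x.1 x.2 ω)) =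
      (massMeas α β).prod (massMeas α β) := by
  obtain ⟨A, hA, hw⟩ := exists_frame hα hβ _ (mdot_omHat_self hα hβ hω)
  have key := fun x y => coll_frame_rapid (α := α) (β := β) hA hw x y
  constructor
  · intro p q
    obtain ⟨x, rfl⟩ := A.surjective.comp rapid_surjective p
    obtain ⟨y, rfl⟩ := A.surjective.comp rapid_surjective q
    simp only [Function.comp]
    rw [(key x y).1, (key x y).2, (key _ _).1, (key _ _).2, Prod.mk.eta, rapColl_rapColl]
    exact ⟨rfl, rfl⟩
  · obtain ⟨c, hc⟩ := massMeas_eq hA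
    have hmm : Measurable fun x => A (rapid x) := A.continuous.measurable.comp measurable_rapid
    have hT : Measurable fun x : E3 × E3 => (pPr α β x.1 x.2 ω, qPr α β x.1 x.2 ω) :=
      measurable_coll.comp (measurable_const.prodMk measurable_id)
    have hprod : (massMeas α β).prod (massMeas α β) = c • c •
        ((volume : Measure (ℝ × ℝ × ℝ)).prod (volume : Measure (ℝ × ℝ × ℝ))).map
          (Prod.map (fun x => A (rapid x)) (fun x => A (rapid x))) := by
      rw [hc, ← Measure.map_prod_map _ _ hmm hmm]
      rw [Measure.prod_smul_left, Measure.prod_smul_right]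
    rw [hprod, Measure.map_smul, Measure.map_smul,
      Measure.map_map hT (hmm.prodMap hmm)]
    congr 2
    conv_rhs => rw [← measurePreserving_rapColl.map_eq]
    rw [Measure.map_map (hmm.prodMap hmm) measurePreserving_rapColl.measurable]
    congr 1
    funext x
    simp only [Function.comp, Prod.map]
    rw [(key _ _).1, (key _ _).2]

end Invariance

/-! ### Fubini -/

instance : IsFiniteMeasure sphMeas := by unfold sphMeas; infer_instance

section Fubini

variable {α β : ℝ}

lemma integral_massMeas (F : E3 → ℝ) :
    ∫ p, F p ∂massMeas α β = ∫ p, (pZ α β p)⁻¹ * F p := by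
  have hm : Measurable fun p : E3 => ((pZ α β p)⁻¹).toNNReal := by
    have := (continuous_pZ (α := α) (β := β)).measurable
    fun_prop
  rw [massMeas, integral_withDensity_eq_integral_smul hm]
  congr 1
  funext p
  rw [NNReal.smul_def, Real.coe_toNNReal _ (inv_pos.2 (pZ_pos p)).le, smul_eq_mul]

lemma integrable_massMeas_iff (F : E3 → ℝ) :
    Integrable F (massMeas α β) ↔ Integrable (fun p => (pZ α β p)⁻¹ * F p) := by
  have hm : Measurable fun p : E3 => ((pZ α β p)⁻¹).toNNReal := by
    have := (continuous_pZ (α := α) (β := β)).measurable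
    fun_prop
  rw [massMeas, integrable_withDensity_iff_integrable_smul hm]
  refine iff_of_eq (congrArg (Integrable · volume) ?_)
  funext p
  rw [NNReal.smul_def, Real.coe_toNNReal _ (inv_pos.2 (pZ_pos p)).le, smul_eq_mul]

lemma Integrable.massMeas {F : E3 → ℝ} (hF : Integrable F) : Integrable F (massMeas α β) := by
  rw [integrable_massMeas_iff]
  refine hF.bdd_mul (c := 1) ?_ (.of_forall fun p => ?_)
  · exact ((continuous_pZ (α := α) (β := β)).measurable.inv).aestronglyMeasurable
  · rw [norm_inv, Real.norm_of_nonneg (pZ_pos p).le]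
    exact inv_le_one_of_one_le₀ (one_le_pZ p)

/-- Fubini for the integrals occurring in the gain and loss terms. -/
lemma fubini_coll {H : Metric.sphere (0 : E3) 1 × E3 × E3 → ℝ}
    (hH : Integrable H (sphMeas.prod ((massMeas α β).prod (massMeas α β)))) :
    Integrable (fun p => (pZ α β p)⁻¹ *
      (α * β ^ 2 * ∫ q : E3, (pZ α β q)⁻¹ * ∫ ω, H (ω, p, q) ∂sphMeas)) ∧
    ∫ p, (pZ α β p)⁻¹ * (α * β ^ 2 * ∫ q : E3, (pZ α β q)⁻¹ * ∫ ω, H (ω, p, q) ∂sphMeas) =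
      α * β ^ 2 * ∫ x, H x ∂(sphMeas.prod ((massMeas α β).prod (massMeas α β))) := by
  have hi := hH.integral_prod_right
  simp only [← integral_massMeas, ← integrable_massMeas_iff]
  refine ⟨hi.integral_prod_left.const_mul _, ?_⟩
  rw [integral_const_mul, integral_prod_symm _ hH, integral_prod _ hi]

end Fubini

theorem statement_5
    (C₀ C₁ α β : ℝ) (hC₀ : 0 < C₀) (hC₁ : 0 < C₁) (hα : C₀ ≤ α) (hβ : C₀ ≤ β)
    (S₀ : E3 → E3 → E3 → E3 → ℝ)
    (hS₀meas : Measurable fun x : (E3 × E3) × E3 × E3 => S₀ x.1.1 x.1.2 x.2.1 x.2.2)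
    (hS₀nonneg : ∀ p q p' q', 0 ≤ S₀ p q p' q')
    (hS₀bdd : ∀ p q p' q', S₀ p q p' q' ≤ C₁)
    (hS₀symm : ∀ p q p' q', S₀ p q p' q' = S₀ p' q' p q)
    (f g : L1) :
    (∫ p : E3, (pZ α β p)⁻¹ * Qcoll α β S₀ (⇑f) (⇑g) p = 0) ∧
    ∫ p : E3, (pZ α β p)⁻¹ * Qplus α β S₀ (⇑f) (⇑g) p =
      ∫ p : E3, (pZ α β p)⁻¹ * Qminus α β S₀ (⇑f) (⇑g) p := by
  have hα0 : 0 < α := hC₀.trans_le hα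
  have hβ0 : 0 < β := hC₀.trans_le hβ
  have hne : ∀ ω : Metric.sphere (0 : E3) 1, (ω : E3) ≠ 0 :=
    fun ω => ne_zero_of_mem_unit_sphere ω
  set ν := sphMeas.prod ((massMeas α β).prod (massMeas α β)) with hν
  let T : Metric.sphere (0 : E3) 1 × E3 × E3 → Metric.sphere (0 : E3) 1 × E3 × E3 :=
    fun x => (x.1, pPr α β x.2.1 x.2.2 x.1, qPr α β x.2.1 x.2.2 x.1)
  have hcoll : Measurable fun x : Metric.sphere (0 : E3) 1 × E3 × E3 =>
      (pPr α β x.2.1 x.2.2 x.1, qPr α β x.2.1 x.2.2 x.1) :=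
    measurable_coll.comp (g := fun x : E3 × E3 × E3 =>
        (pPr α β x.2.1 x.2.2 x.1, qPr α β x.2.1 x.2.2 x.1))
      (f := fun x : Metric.sphere (0 : E3) 1 × E3 × E3 => ((x.1 : E3), x.2))
      ((measurable_subtype_coe.comp measurable_fst).prodMk measurable_snd)
  have hT : MeasurePreserving T ν ν :=
    (MeasurePreserving.id sphMeas).skew_product
      (g := fun (ω : Metric.sphere (0 : E3) 1) (x : E3 × E3) => (pPr α β x.1 x.2 ω, qPr α β x.1 x.2 ω)) hcoll
      (.of_forall fun ω => (coll_invariant hα0 hβ0 (hne ω)).2)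
  let G : Metric.sphere (0 : E3) 1 × E3 × E3 → ℝ := fun x =>
    f x.2.1 * g x.2.2 * S₀ x.2.1 x.2.2 (pPr α β x.2.1 x.2.2 x.1) (qPr α β x.2.1 x.2.2 x.1)
  have hG : Integrable G ν := by
    have hf : Integrable f (massMeas α β) := Integrable.massMeas (L1.integrable_coeFn f)
    have hg : Integrable g (massMeas α β) := Integrable.massMeas (L1.integrable_coeFn g)
    have h1 : Integrable (fun x : Metric.sphere (0 : E3) 1 × E3 × E3 => f x.2.1 * g x.2.2) ν :=
      (hf.mul_prod hg).comp_snd sphMeas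
    refine h1.mul_bdd (c := C₁) ?_ (.of_forall fun x => ?_)
    · exact (hS₀meas.comp (g := fun x : (E3 × E3) × E3 × E3 => S₀ x.1.1 x.1.2 x.2.1 x.2.2)
        (measurable_snd.prodMk hcoll)).aestronglyMeasurable
    · rw [Real.norm_of_nonneg (hS₀nonneg _ _ _ _)]
      exact hS₀bdd _ _ _ _
  have hGT : Integrable (G ∘ T) ν := hT.integrable_comp_of_integrable hG
  have hint : ∫ x, (G ∘ T) x ∂ν = ∫ x, G x ∂ν := by
    conv_rhs => rw [← hT.map_eq]
    rw [integral_map hT.measurable.aemeasurable (by rw [hT.map_eq]; exact hG.1)]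
    rfl
  -- Precomposing the loss integrand with `T` gives the gain integrand: `T` is an involution, and
  -- `S₀` is symmetric under exchange of incoming and outgoing momenta.
  have hGT_eq : ∀ ω p q, (G ∘ T) (ω, p, q) = f (pPr α β p q ω) * g (qPr α β p q ω) *
      S₀ p q (pPr α β p q ω) (qPr α β p q ω) := by
    intro ω p q
    obtain ⟨h1, h2⟩ := (coll_invariant hα0 hβ0 (hne ω)).1 p q
    simp only [G, T, Function.comp]
    rw [h1, h2, hS₀symm]
  obtain ⟨ip, ep⟩ := fubini_coll (α := α) (β := β) hGT
  obtain ⟨im, em⟩ := fubini_coll (α := α) (β := β) hG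
  rw [← hν, hint] at ep
  simp only [hGT_eq] at ip ep
  have heq : ∫ p : E3, (pZ α β p)⁻¹ * Qplus α β S₀ (⇑f) (⇑g) p =
      ∫ p : E3, (pZ α β p)⁻¹ * Qminus α β S₀ (⇑f) (⇑g) p :=
    ep.trans em.symm
  refine ⟨?_, heq⟩
  simp only [Qcoll, mul_sub]
  exact (integral_sub ip im).trans (sub_eq_zero.2 heq)
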